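/- arXiv:2507.22138 — 2 statements merged into one kernel-verified Lean document; each statement's English description precedes it below -/
import Mathlib

section
/- Let u₁, …, u_m be nonzero vectors in ℝⁿ (m ≥ 1). The elementary star transform of order 1, defined on smooth compactly supported functions f : ℝⁿ → ℝ by S f = Σ_{i=1}^m 𝒳_{u_i} f, is injective (i.e. for every smooth compactly supported f, if S f vanishes identically then f = 0) if and only if the dual symbol is not identically zero, i.e. there exists ξ ∈ ℝⁿ such that e_{m-1}(⟨u₁, ξ⟩, …, ⟨u_m, ξ⟩) = Σ_{j=1}^m Π_{i ≠ j} ⟨u_i, ξ⟩ ≠ 0. -/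
open MeasureTheory
open scoped RealInnerProductSpace

/-- The divergent beam transform `𝒳_u f` on `ℝⁿ`:
`(𝒳_u f)(x) = ∫_{-∞}^0 f(x + t • u) dt`. -/
noncomputable def beam {n : ℕ} (u : EuclideanSpace ℝ (Fin n))
    (f : EuclideanSpace ℝ (Fin n) → ℝ) (x : EuclideanSpace ℝ (Fin n)) : ℝ :=
  ∫ t in Set.Iio (0 : ℝ), f (x + t • u)

/-!
For a compactly supported `C¹` function `f` and `u ≠ 0`, the beam transform `𝒳_u` inverts the
directional derivative `∂_u` and commutes with every `∂_v`. Hence applying `∂_{u₁} ⋯ ∂_{u_m}` to the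
star transform `S f = ∑ i, 𝒳_{u_i} f` gives the *dual operator* `Q f = ∑ j, (∏ i ≠ j, ∂_{u_i}) f`,
which is the Fourier multiplier with symbol `(2πi)^(m-1)` times the dual symbol. If the dual symbol
is not identically zero, it is nonzero on a dense set, and `S f = 0` forces `Q f = 0`, `𝓕 f = 0` and
`f = 0`. If it vanishes identically, then `Q = 0`, and `∂_{u₁} ⋯ ∂_{u_m} f` is a nonzero element of
the kernel of `S` for every nonzero test function `f`.
-/

open scoped ContDiff FourierTransform LineDeriv Pointwise SchwartzMap Topology

section BeamTransform

variable {E V : Type*} [NormedAddCommGroup E] [NormedSpace ℝ E]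
  [NormedAddCommGroup V] {f : E → V} {u : E}

lemma isClosedEmbedding_add_smul (hu : u ≠ 0) (x : E) :
    Topology.IsClosedEmbedding fun t : ℝ => x + t • u :=
  (Homeomorph.addLeft x).isClosedEmbedding.comp (isClosedEmbedding_smul_left hu)

lemma integrable_comp_add_smul (hf : Continuous f) (hfc : HasCompactSupport f) (hu : u ≠ 0)
    (x : E) : Integrable fun t : ℝ => f (x + t • u) :=
  (hf.comp (by fun_prop)).integrable_of_hasCompactSupport
    (hfc.comp_isClosedEmbedding (isClosedEmbedding_add_smul hu x))

lemma exists_integrable_bound_comp_add_smul (hf : Continuous f) (hfc : HasCompactSupport f)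
    (hu : u ≠ 0) {K : Set E} (hK : IsCompact K) :
    ∃ bound : ℝ → ℝ, Integrable bound ∧ ∀ t, ∀ x ∈ K, ‖f (x + t • u)‖ ≤ bound t := by
  obtain ⟨C, hC⟩ := hfc.exists_bound_of_continuous hf
  set A : Set ℝ := (fun t : ℝ => t • u) ⁻¹' (tsupport f - K)
  have hA : IsCompact A := (isClosedEmbedding_smul_left hu).isCompact_preimage <| by
    simpa only [sub_eq_add_neg] using IsCompact.add hfc hK.neg
  refine ⟨A.indicator fun _ => C, ?_, fun t x hx => ?_⟩
  · rw [integrable_indicator_iff hA.measurableSet]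
    exact integrableOn_const hA.measure_lt_top.ne
  · by_cases ht : t ∈ A
    · simpa only [Set.indicator_of_mem ht] using hC (x + t • u)
    · have hxt : x + t • u ∉ tsupport f := fun h =>
        ht ⟨x + t • u, h, x, hx, add_sub_cancel_left x (t • u)⟩
      rw [Set.indicator_of_notMem ht, image_eq_zero_of_notMem_tsupport hxt, norm_zero]

variable [NormedSpace ℝ V]

/-- The divergent beam transform `x ↦ ∫_{-∞}^0 f(x + t • u) dt` of vector-valued functions on a
normed space; for real-valued functions on `ℝⁿ` it unfolds to `beam`. -/
noncomputable def beamTransform (u : E) (f : E → V) (x : E) : V :=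
  ∫ t in Set.Iio (0 : ℝ), f (x + t • u)

lemma hasDerivAt_comp_add_smul {x v : E} {t : ℝ} (hf : DifferentiableAt ℝ f (x + t • v)) :
    HasDerivAt (fun s : ℝ => f (x + s • v)) (fderiv ℝ f (x + t • v) v) t := by
  have hline : HasDerivAt (fun s : ℝ => x + s • v) v t := by
    simpa only [id, one_smul] using ((hasDerivAt_id t).smul_const v).const_add x
  exact hf.hasFDerivAt.comp_hasDerivAt t hline

lemma beamTransform_fderiv_self [CompleteSpace V] (hf : ContDiff ℝ 1 f)
    (hfc : HasCompactSupport f) (hu : u ≠ 0) :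
    beamTransform u (fun y => fderiv ℝ f y u) = f := by
  ext x
  have hderiv (t : ℝ) : deriv (fun s : ℝ => f (x + s • u)) t = fderiv ℝ f (x + t • u) u :=
    (hasDerivAt_comp_add_smul (hf.differentiable one_ne_zero _)).deriv
  calc beamTransform u (fun y => fderiv ℝ f y u) x
      = ∫ t in Set.Iic (0 : ℝ), deriv (fun s : ℝ => f (x + s • u)) t := by
        simp only [beamTransform, integral_Iic_eq_integral_Iio, hderiv]
    _ = f (x + (0 : ℝ) • u) :=
        HasCompactSupport.integral_Iic_deriv_eq (hf.comp (by fun_prop))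
          (hfc.comp_isClosedEmbedding (isClosedEmbedding_add_smul hu x)) 0
    _ = f x := by rw [zero_smul, add_zero]

lemma hasLineDerivAt_beamTransform (hf : ContDiff ℝ 1 f) (hfc : HasCompactSupport f) (hu : u ≠ 0)
    (x v : E) :
    HasLineDerivAt ℝ (beamTransform u f) (beamTransform u (fun y => fderiv ℝ f y v) x) x v := by
  have hf' : Continuous fun y => fderiv ℝ f y v :=
    (hf.continuous_fderiv one_ne_zero).clm_apply continuous_const
  have hcont (s : ℝ) : Continuous fun t : ℝ => x + s • v + t • u := by fun_prop
  have hK : IsCompact ((fun s : ℝ => x + s • v) '' Set.Icc (-1) 1) :=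
    isCompact_Icc.image (by fun_prop)
  obtain ⟨bound, hbound, hle⟩ :=
    exists_integrable_bound_comp_add_smul hf' (hfc.fderiv_apply ℝ v) hu hK
  have hderiv (s t : ℝ) : HasDerivAt (fun r : ℝ => f (x + r • v + t • u))
      (fderiv ℝ f (x + s • v + t • u) v) s := by
    simpa only [add_right_comm] using
      hasDerivAt_comp_add_smul (x := x + t • u) (v := v) (t := s)
        (hf.differentiable one_ne_zero _)
  have key := (hasDerivAt_integral_of_dominated_loc_of_deriv_le
    (μ := volume.restrict (Set.Iio 0)) (x₀ := (0 : ℝ))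
    (Icc_mem_nhds neg_one_lt_zero one_pos)
    (.of_forall fun s => (hf.continuous.comp (hcont s)).aestronglyMeasurable)
    (integrable_comp_add_smul hf.continuous hfc hu _).integrableOn
    (hf'.comp (hcont 0)).aestronglyMeasurable
    (.of_forall fun t s hs => hle t _ (Set.mem_image_of_mem _ hs))
    hbound.integrableOn
    (.of_forall fun t s _ => hderiv s t)).2
  simpa only [HasLineDerivAt, beamTransform, Function.comp_apply, zero_smul, add_zero] using key

end BeamTransform

section StarTransform

variable {ι E V W : Type*} [Fintype ι] [NormedAddCommGroup E] [NormedSpace ℝ E]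
  [NormedAddCommGroup V] [NormedSpace ℝ V] [NormedAddCommGroup W] [NormedSpace ℝ W]

/-- The elementary star transform of order 1, the sum of the beam transforms in the directions
`u i`. -/
noncomputable def starTransform (u : ι → E) (f : E → V) (x : E) : V :=
  ∑ i, beamTransform (u i) f x

variable (V) in
/-- Injectivity of the star transform on smooth compactly supported `V`-valued functions, stated as
triviality of the kernel of this linear map. -/
def StarInjective (u : ι → E) : Prop :=
  ∀ f : E → V, ContDiff ℝ ∞ f → HasCompactSupport f → (∀ x, starTransform u f x = 0) → f = 0

variable {u : ι → E}

lemma starTransform_clm_comp [CompleteSpace V] [CompleteSpace W] (L : V →L[ℝ] W) {f : E → V}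
    (hf : Continuous f) (hfc : HasCompactSupport f) (hu : ∀ i, u i ≠ 0) (x : E) :
    starTransform u (L ∘ f) x = L (starTransform u f x) := by
  have hbeam (i : ι) : beamTransform (u i) (L ∘ f) x = L (beamTransform (u i) f x) :=
    L.integral_comp_comm (integrable_comp_add_smul hf hfc (hu i) x).integrableOn
  simp only [starTransform, hbeam, map_sum]

lemma StarInjective.of_nontrivial [CompleteSpace V] [CompleteSpace W] [Nontrivial V]
    (hu : ∀ i, u i ≠ 0) (h : StarInjective V u) : StarInjective W u := by
  intro f hf hfc hS
  obtain ⟨v, hv⟩ := exists_ne (0 : V)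
  ext x
  refine SeparatingDual.eq_zero_of_forall_dual_eq_zero (R := ℝ) fun L => ?_
  set T : W →L[ℝ] V := L.smulRight v
  have hTf : T ∘ f = 0 := h _ (T.contDiff.comp hf) (hfc.comp_left (map_zero T)) fun y => by
    rw [starTransform_clm_comp T hf.continuous hfc hu, hS, map_zero]
  exact (smul_eq_zero_iff_left hv).mp (congrFun hTf x)

lemma starTransform_fderiv_eq_zero {f : E → V} (hf : ContDiff ℝ 1 f) (hfc : HasCompactSupport f)
    (hu : ∀ i, u i ≠ 0) (hS : ∀ x, starTransform u f x = 0) (v x : E) :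
    starTransform u (fun y => fderiv ℝ f y v) x = 0 := by
  have hderiv : HasLineDerivAt ℝ (starTransform u f)
      (starTransform u (fun y => fderiv ℝ f y v) x) x v :=
    HasDerivAt.fun_sum fun i _ => hasLineDerivAt_beamTransform hf hfc (hu i) x v
  rw [funext hS] at hderiv
  exact hderiv.unique (hasDerivAt_const _ _)

end StarTransform

section MultisetLineDeriv

variable {E V : Type*} [NormedAddCommGroup E] [NormedSpace ℝ E]
  [NormedAddCommGroup V] [NormedSpace ℝ V]

lemma lineDerivOp_lineDerivOp_comm (v w : E) (F : 𝓢(E, V)) : ∂_{v} (∂_{w} F) = ∂_{w} (∂_{v} F) := by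
  have hF : ContDiff ℝ 2 F := F.smooth 2
  have hsymm (x : E) : IsSymmSndFDerivAt ℝ F x :=
    hF.contDiffAt.isSymmSndFDerivAt (by simp)
  have hdiff (x : E) : DifferentiableAt ℝ (fderiv ℝ F) x :=
    (hF.fderiv_right (m := 1) le_rfl).differentiable one_ne_zero x
  have hsnd (a b x : E) : ∂_{a} (∂_{b} F) x = fderiv ℝ (fderiv ℝ F) x a b := by
    change fderiv ℝ (fun y => fderiv ℝ F y b) x a = _
    rw [fderiv_clm_apply (hdiff x) (differentiableAt_const b)]
    simp
  ext x
  rw [hsnd, hsnd, (hsymm x).eq]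

instance : LeftCommutative (LineDeriv.lineDerivOp : E → 𝓢(E, V) → 𝓢(E, V)) :=
  ⟨lineDerivOp_lineDerivOp_comm⟩

/-- The iterated derivative of a Schwartz function along a multiset of directions. A multiset,
unlike the tuples of `LineDeriv.iteratedLineDerivOp`, makes it easy to single out one direction. -/
noncomputable def multisetLineDeriv (s : Multiset E) (F : 𝓢(E, V)) : 𝓢(E, V) :=
  s.foldr LineDeriv.lineDerivOp F

@[simp]
lemma multisetLineDeriv_zero (F : 𝓢(E, V)) : multisetLineDeriv 0 F = F := rfl

@[simp]
lemma multisetLineDeriv_cons (v : E) (s : Multiset E) (F : 𝓢(E, V)) :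
    multisetLineDeriv (v ::ₘ s) F = ∂_{v} (multisetLineDeriv s F) :=
  Multiset.foldr_cons ..

lemma hasCompactSupport_multisetLineDeriv (s : Multiset E) {F : 𝓢(E, V)}
    (hF : HasCompactSupport F) : HasCompactSupport (multisetLineDeriv s F) := by
  induction s using Multiset.induction_on with
  | empty => exact hF
  | cons v s ih =>
    rw [multisetLineDeriv_cons]
    exact ih.fderiv_apply ℝ v

lemma beamTransform_lineDerivOp_self [CompleteSpace V] {u : E} (hu : u ≠ 0) {F : 𝓢(E, V)}
    (hF : HasCompactSupport F) : beamTransform u (∂_{u} F : 𝓢(E, V)) = F :=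
  beamTransform_fderiv_self (F.smooth 1) hF hu

lemma eq_zero_of_multisetLineDeriv_eq_zero [CompleteSpace V] {s : Multiset E} (hs : 0 ∉ s)
    {F : 𝓢(E, V)} (hF : HasCompactSupport F) (h : multisetLineDeriv s F = 0) : F = 0 := by
  induction s using Multiset.induction_on with
  | empty => exact h
  | cons v s ih =>
    rw [Multiset.mem_cons, not_or] at hs
    refine ih hs.2 (DFunLike.coe_injective ?_)
    rw [multisetLineDeriv_cons] at h
    rw [← beamTransform_lineDerivOp_self (Ne.symm hs.1) (hasCompactSupport_multisetLineDeriv s hF),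
      h]
    ext x
    simp [beamTransform]

lemma starTransform_multisetLineDeriv_eq_zero {ι : Type*} [Fintype ι] {u : ι → E}
    (hu : ∀ i, u i ≠ 0) {F : 𝓢(E, V)} (hF : HasCompactSupport F)
    (hS : ∀ x, starTransform u F x = 0) (s : Multiset E) (x : E) :
    starTransform u (multisetLineDeriv s F) x = 0 := by
  induction s using Multiset.induction_on generalizing x with
  | empty => exact hS x
  | cons v s ih =>
    rw [multisetLineDeriv_cons]
    exact starTransform_fderiv_eq_zero ((multisetLineDeriv s F).smooth 1)
      (hasCompactSupport_multisetLineDeriv s hF) hu ih v x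

end MultisetLineDeriv

section DualOperator

variable {ι E V : Type*} [Fintype ι] [DecidableEq ι] [NormedAddCommGroup E] [NormedSpace ℝ E]
  [NormedAddCommGroup V] [NormedSpace ℝ V]

/-- The dual differential operator `Q = ∑ j, ∏ i ≠ j, ∂_{u i}` of the star transform, whose symbol
is `dualSymbol u` up to a power of `2πi`. -/
noncomputable def dualOperator (u : ι → E) (F : 𝓢(E, V)) : 𝓢(E, V) :=
  ∑ j, multisetLineDeriv ((Finset.univ.erase j).val.map u) F

variable {u : ι → E} {F : 𝓢(E, V)}

lemma starTransform_multisetLineDeriv_univ [CompleteSpace V] (hu : ∀ i, u i ≠ 0)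
    (hF : HasCompactSupport F) (x : E) :
    starTransform u (multisetLineDeriv (Finset.univ.val.map u) F) x = dualOperator u F x := by
  rw [starTransform, dualOperator, sum_apply]
  refine Finset.sum_congr rfl fun j _ => ?_
  have hsplit : Finset.univ.val.map u = u j ::ₘ (Finset.univ.erase j).val.map u := by
    rw [← Multiset.map_cons, Finset.erase_val, Multiset.cons_erase (Finset.mem_univ_val j)]
  rw [hsplit, multisetLineDeriv_cons,
    beamTransform_lineDerivOp_self (hu j) (hasCompactSupport_multisetLineDeriv _ hF)]

lemma dualOperator_eq_zero_of_starTransform_eq_zero [CompleteSpace V] (hu : ∀ i, u i ≠ 0)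
    (hF : HasCompactSupport F) (hS : ∀ x, starTransform u F x = 0) : dualOperator u F = 0 := by
  ext x
  rw [← starTransform_multisetLineDeriv_univ hu hF,
    starTransform_multisetLineDeriv_eq_zero hu hF hS, zero_apply]

end DualOperator

section DualSymbol

variable {ι E : Type*} [Fintype ι] [DecidableEq ι] [NormedAddCommGroup E] [InnerProductSpace ℝ E]

/-- The dual symbol `ξ ↦ e_{m-1}(⟪u₁, ξ⟫, …, ⟪u_m, ξ⟫)` of the star transform in the directions
`u₁, …, u_m`. -/
noncomputable def dualSymbol (u : ι → E) (ξ : E) : ℝ :=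
  ∑ j, ∏ i ∈ Finset.univ.erase j, ⟪u i, ξ⟫

lemma analyticOnNhd_dualSymbol (u : ι → E) : AnalyticOnNhd ℝ (dualSymbol u) Set.univ := fun ξ _ =>
  Finset.analyticAt_fun_sum _ fun _ _ => Finset.analyticAt_fun_prod _ fun i _ =>
    (innerSL ℝ (u i)).analyticAt ξ

lemma dense_setOf_ne_zero_of_analyticOnNhd {𝕜 E F : Type*} [NontriviallyNormedField 𝕜]
    [NormedAddCommGroup E] [NormedSpace 𝕜 E] [PreconnectedSpace E]
    [NormedAddCommGroup F] [NormedSpace 𝕜 F] {f : E → F}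
    (hf : AnalyticOnNhd 𝕜 f Set.univ) {x₀ : E} (hx₀ : f x₀ ≠ 0) : Dense {x | f x ≠ 0} := by
  intro x
  rw [mem_closure_iff_frequently]
  intro hzero
  have hnear : f =ᶠ[𝓝 x] 0 := hzero.mono fun _ => not_not.mp
  exact hx₀ (hf.eqOn_zero_of_preconnected_of_eventuallyEq_zero isPreconnected_univ
    (Set.mem_univ x) hnear (Set.mem_univ x₀))

end DualSymbol

section FourierMultiplier

variable {ι E V : Type*} [NormedAddCommGroup E] [InnerProductSpace ℝ E]
  [FiniteDimensional ℝ E] [MeasurableSpace E] [BorelSpace E]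
  [NormedAddCommGroup V] [NormedSpace ℂ V]

lemma fourier_multisetLineDeriv (s : Multiset E) (F : 𝓢(E, V)) (ξ : E) :
    𝓕 (multisetLineDeriv s F) ξ =
      (s.map fun v => 2 * Real.pi * Complex.I * (⟪v, ξ⟫ : ℂ)).prod • 𝓕 F ξ := by
  induction s using Multiset.induction_on with
  | empty => simp
  | cons v s ih =>
    have hgrowth : (fun η : E => ⟪η, v⟫).HasTemperateGrowth := by fun_prop
    rw [multisetLineDeriv_cons, SchwartzMap.fourier_lineDerivOp_eq, smul_apply,
      SchwartzMap.smulLeftCLM_apply_apply hgrowth, ih, real_inner_comm, ← Complex.coe_smul,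
      smul_smul, smul_smul, Multiset.map_cons, Multiset.prod_cons, mul_assoc]

variable [Fintype ι] [DecidableEq ι] {u : ι → E}

lemma fourier_dualOperator (u : ι → E) (F : 𝓢(E, V)) (ξ : E) :
    𝓕 (dualOperator u F) ξ =
      ((2 * Real.pi * Complex.I) ^ (Fintype.card ι - 1) * (dualSymbol u ξ : ℂ)) • 𝓕 F ξ := by
  have hterm (j : ι) : 𝓕 (multisetLineDeriv ((Finset.univ.erase j).val.map u) F) ξ =
      ((2 * Real.pi * Complex.I) ^ (Fintype.card ι - 1) *
        ((∏ i ∈ Finset.univ.erase j, ⟪u i, ξ⟫ : ℝ) : ℂ)) • 𝓕 F ξ := by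
    rw [fourier_multisetLineDeriv, Multiset.map_map]
    change (∏ i ∈ Finset.univ.erase j, 2 * Real.pi * Complex.I * (⟪u i, ξ⟫ : ℂ)) • _ = _
    rw [Finset.prod_mul_distrib, Finset.prod_const, Finset.card_erase_of_mem (Finset.mem_univ j),
      Finset.card_univ, Complex.ofReal_prod]
  rw [dualOperator, FourierTransform.fourier_sum, sum_apply,
    Finset.sum_congr rfl fun j _ => hterm j, ← Finset.sum_smul, ← Finset.mul_sum,
    ← Complex.ofReal_sum, dualSymbol]

lemma eq_zero_of_fourier_eq_zero [CompleteSpace V] {F : 𝓢(E, V)} (h : ∀ ξ, 𝓕 F ξ = 0) : F = 0 :=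
  (FourierTransform.fourierEquiv ℂ 𝓢(E, V)).map_eq_zero_iff.mp (DFunLike.ext _ _ h)

lemma dualOperator_eq_zero_of_dualSymbol_eq_zero [CompleteSpace V] (h : ∀ ξ, dualSymbol u ξ = 0)
    (F : 𝓢(E, V)) : dualOperator u F = 0 :=
  eq_zero_of_fourier_eq_zero fun ξ => by
    rw [fourier_dualOperator, h, Complex.ofReal_zero, mul_zero, zero_smul]

lemma eq_zero_of_dualOperator_eq_zero [CompleteSpace V] {ξ₀ : E} (hξ₀ : dualSymbol u ξ₀ ≠ 0)
    {F : 𝓢(E, V)} (hF : dualOperator u F = 0) : F = 0 := by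
  have hzero : Set.EqOn (𝓕 F : 𝓢(E, V)) 0 {ξ | dualSymbol u ξ ≠ 0} := fun ξ hξ => by
    have hmul := fourier_dualOperator u F ξ
    rw [hF, FourierTransform.fourier_zero, zero_apply, eq_comm] at hmul
    exact (smul_eq_zero_iff_right (mul_ne_zero (pow_ne_zero _ Complex.two_pi_I_ne_zero)
      (Complex.ofReal_ne_zero.mpr hξ))).mp hmul
  exact eq_zero_of_fourier_eq_zero <| congrFun <| Continuous.ext_on
    (dense_setOf_ne_zero_of_analyticOnNhd (analyticOnNhd_dualSymbol u) hξ₀)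
    (SchwartzMap.continuous _) continuous_zero hzero

end FourierMultiplier

section Injectivity

lemma exists_schwartzMap_hasCompactSupport_ne_zero (E V : Type*) [NormedAddCommGroup E]
    [NormedSpace ℝ E] [FiniteDimensional ℝ E] [NormedAddCommGroup V] [NormedSpace ℝ V]
    [Nontrivial V] :
    ∃ F : 𝓢(E, V), HasCompactSupport F ∧ F ≠ 0 := by
  obtain ⟨v, hv⟩ := exists_ne (0 : V)
  let b : ContDiffBump (0 : E) := default
  have hb : HasCompactSupport fun x => b x • v := b.hasCompactSupport.smul_right
  refine ⟨hb.toSchwartzMap (b.contDiff.smul contDiff_const), hb, fun h => hv ?_⟩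
  calc v = b 0 • v := by
        rw [b.one_of_mem_closedBall (Metric.mem_closedBall_self b.rIn_pos.le), one_smul]
    _ = 0 := DFunLike.congr_fun h 0

variable {ι E V : Type*} [Fintype ι] [DecidableEq ι] [NormedAddCommGroup E]
  [InnerProductSpace ℝ E] [FiniteDimensional ℝ E] [NormedAddCommGroup V] {u : ι → E}

lemma starInjective_of_dualSymbol_ne_zero [NormedSpace ℂ V] [CompleteSpace V]
    (hu : ∀ i, u i ≠ 0) {ξ : E} (hξ : dualSymbol u ξ ≠ 0) : StarInjective V u := by
  borelize E
  intro f hf hfc hS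
  set F : 𝓢(E, V) := hfc.toSchwartzMap hf
  have hF : F = 0 := eq_zero_of_dualOperator_eq_zero hξ
    (dualOperator_eq_zero_of_starTransform_eq_zero hu hfc hS)
  exact congrArg DFunLike.coe hF

lemma exists_dualSymbol_ne_zero_of_starInjective [NormedSpace ℂ V] [CompleteSpace V] [Nontrivial V]
    (hu : ∀ i, u i ≠ 0) (h : StarInjective V u) : ∃ ξ, dualSymbol u ξ ≠ 0 := by
  borelize E
  by_contra! hzero
  obtain ⟨F, hFc, hF⟩ := exists_schwartzMap_hasCompactSupport_ne_zero E V
  set G := multisetLineDeriv (Finset.univ.val.map u) F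
  have hG : G = 0 := DFunLike.coe_injective <|
    h G (G.smooth ⊤) (hasCompactSupport_multisetLineDeriv _ hFc) fun x => by
      rw [starTransform_multisetLineDeriv_univ hu hFc,
        dualOperator_eq_zero_of_dualSymbol_eq_zero hzero, zero_apply]
  refine hF (eq_zero_of_multisetLineDeriv_eq_zero ?_ hFc hG)
  simpa using hu

theorem star_injective_iff_dualSymbol_ne_zero_general [NormedSpace ℝ V] [CompleteSpace V]
    [Nontrivial V] (u : ι → E) (hu : ∀ i, u i ≠ 0) :
    StarInjective V u ↔ ∃ ξ, dualSymbol u ξ ≠ 0 :=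
  ⟨fun h => exists_dualSymbol_ne_zero_of_starInjective (V := ℂ) hu (h.of_nontrivial hu),
    fun ⟨_, hξ⟩ => (starInjective_of_dualSymbol_ne_zero (V := ℂ) hu hξ).of_nontrivial hu⟩

end Injectivity

/-- the order-1 elementary star transform `S f = Σ_i 𝒳_{u_i} f` is
injective on smooth compactly supported functions iff the dual symbol
`ξ ↦ e_{m-1}(⟨u₁,ξ⟩, …, ⟨u_m,ξ⟩) = Σ_j Π_{i ≠ j} ⟨u_i, ξ⟩` is not identically zero. -/
theorem star_injective_iff_dualSymbol_ne_zero {n m : ℕ} (hm : 1 ≤ m)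
    (u : Fin m → EuclideanSpace ℝ (Fin n)) (hu : ∀ i, u i ≠ 0) :
    (∀ f : EuclideanSpace ℝ (Fin n) → ℝ, ContDiff ℝ (⊤ : ℕ∞) f →
        HasCompactSupport f → (∀ x, ∑ i, beam (u i) f x = 0) → f = 0) ↔
      ∃ ξ : EuclideanSpace ℝ (Fin n),
        ∑ j, ∏ i ∈ Finset.univ.erase j, ⟪u i, ξ⟫ ≠ 0 :=
  star_injective_iff_dualSymbol_ne_zero_general u hu
end

section
/- Let φ = (1 + √5)/2 be the golden ratio, and let v₁, …, v₁₂ ∈ ℝ³ be the twelve vertices of a regular icosahedron centered at the origin: (0, ±1, ±φ), (±1, ±φ, 0), (±φ, 0, ±1). Then there exists a nonzero constant C ∈ ℝ such that for every ξ = (ξ₁, ξ₂, ξ₃) ∈ ℝ³, the fourth elementary symmetric polynomial of the twelve dot products satisfies e₄(⟨v₁, ξ⟩, …, ⟨v₁₂, ξ⟩) = C · (ξ₁² + ξ₂² + ξ₃²)². In particular, the differential operator e₄(𝒟_{v₁}, …, 𝒟_{v₁₂}) is a nonzero constant multiple of the square of the Laplacian on ℝ³. -/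
/-- The golden ratio `φ = (1 + √5)/2`. -/
noncomputable def goldenRatio' : ℝ := (1 + Real.sqrt 5) / 2

/-- The twelve vertices `(0, ±1, ±φ), (±1, ±φ, 0), (±φ, 0, ±1)` of a regular
icosahedron centered at the origin. -/
noncomputable def icoVerts : Fin 12 → Fin 3 → ℝ :=
  ![![0, 1, goldenRatio'], ![0, 1, -goldenRatio'],
    ![0, -1, goldenRatio'], ![0, -1, -goldenRatio'],
    ![1, goldenRatio', 0], ![1, -goldenRatio', 0],
    ![-1, goldenRatio', 0], ![-1, -goldenRatio', 0],
    ![goldenRatio', 0, 1], ![goldenRatio', 0, -1],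
    ![-goldenRatio', 0, 1], ![-goldenRatio', 0, -1]]

/-!
By Newton's identities, `8 e₄ = p₂² - 2 p₄` as soon as the power sum `p₁` vanishes, and here it does
because the vertices come in antipodal pairs. The second moment `p₂` is a multiple of `|ξ|²` by
the sign and cyclic symmetries of the vertices. For the fourth moment these symmetries only leave a
combination of `∑ ξⱼ⁴` and `∑ ξⱼ² ξₖ²`, which is a multiple of `|ξ|⁴` exactly because
`φ⁴ + 1 = 3 φ²`. Then `p₂ = 4 (1 + φ²) |ξ|²` and `p₄ = 12 φ² |ξ|⁴`, so that
`C = (16 (1 + φ²)² - 24 φ²) / 8 = 7 φ²`.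
-/

open Finset

section Newton

variable {ι R : Type*} [Fintype ι] [CommRing R]

theorem mul_sum_powersetCard_prod_eq_sum_range (f : ι → R) (k : ℕ) :
    k * ∑ S ∈ univ.powersetCard k, ∏ i ∈ S, f i =
      (-1) ^ (k + 1) * ∑ m ∈ range k,
        (-1) ^ m * (∑ S ∈ univ.powersetCard m, ∏ i ∈ S, f i) * ∑ i, f i ^ (k - m) := by
  have newton := congrArg (MvPolynomial.aeval f) (MvPolynomial.mul_esymm_eq_sum ι R k)
  rw [sum_filter, Nat.sum_antidiagonal_eq_sum_range_succ_mk, sum_range_succ,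
    if_neg (lt_irrefl k), add_zero, sum_congr rfl fun m hm ↦ if_pos (mem_range.mp hm)] at newton
  simpa [MvPolynomial.esymm, MvPolynomial.psum] using newton

theorem two_mul_sum_powersetCard_two_prod_of_sum_eq_zero {f : ι → R} (hf : ∑ i, f i = 0) :
    2 * ∑ S ∈ univ.powersetCard 2, ∏ i ∈ S, f i = -∑ i, f i ^ 2 := by
  have newton : 2 * ∑ S ∈ univ.powersetCard 2, ∏ i ∈ S, f i = (-1) ^ 3 * ∑ i, f i ^ 2 := by
    simpa [sum_range_succ, hf] using mul_sum_powersetCard_prod_eq_sum_range f 2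
  linear_combination newton

theorem four_mul_sum_powersetCard_four_prod_of_sum_eq_zero {f : ι → R} (hf : ∑ i, f i = 0) :
    4 * ∑ S ∈ univ.powersetCard 4, ∏ i ∈ S, f i =
      -((∑ S ∈ univ.powersetCard 2, ∏ i ∈ S, f i) * ∑ i, f i ^ 2) - ∑ i, f i ^ 4 := by
  have esymm_one : ∑ S ∈ univ.powersetCard 1, ∏ i ∈ S, f i = 0 := by
    simpa [powersetCard_one] using hf
  have newton : 4 * ∑ S ∈ univ.powersetCard 4, ∏ i ∈ S, f i = (-1) ^ 5 *
      (∑ i, f i ^ 4 + (∑ S ∈ univ.powersetCard 2, ∏ i ∈ S, f i) * ∑ i, f i ^ 2) := by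
    simpa [sum_range_succ, esymm_one, hf] using mul_sum_powersetCard_prod_eq_sum_range f 4
  linear_combination newton

theorem eight_mul_sum_powersetCard_four_prod_of_sum_eq_zero {f : ι → R} (hf : ∑ i, f i = 0) :
    8 * ∑ S ∈ univ.powersetCard 4, ∏ i ∈ S, f i =
      (∑ i, f i ^ 2) ^ 2 - 2 * ∑ i, f i ^ 4 := by
  linear_combination 2 * four_mul_sum_powersetCard_four_prod_of_sum_eq_zero hf -
    (∑ i, f i ^ 2) * two_mul_sum_powersetCard_two_prod_of_sum_eq_zero hf

end Newton

theorem goldenRatio'_pos : 0 < goldenRatio' :=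
  Real.goldenRatio_pos

theorem goldenRatio'_pow_four_add_one : goldenRatio' ^ 4 + 1 = 3 * goldenRatio' ^ 2 := by
  have hφ : goldenRatio' ^ 2 = goldenRatio' + 1 := Real.goldenRatio_sq
  linear_combination (goldenRatio' ^ 2 + goldenRatio' - 1) * hφ

theorem sum_comp_icoVerts_dotProduct {M : Type*} [AddCommMonoid M] (g : ℝ → M) (ξ : Fin 3 → ℝ) :
    ∑ i, g (∑ j, icoVerts i j * ξ j) =
      ∑ j, (g (ξ j + goldenRatio' * ξ (j + 1)) + g (ξ j - goldenRatio' * ξ (j + 1)) +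
        g (-ξ j + goldenRatio' * ξ (j + 1)) + g (-ξ j - goldenRatio' * ξ (j + 1))) := by
  simp only [icoVerts, Fin.sum_univ_succ, univ_unique, Fin.default_eq_zero, sum_singleton,
    sum_const, card_singleton, one_smul, Matrix.cons_val', Matrix.cons_val_fin_one,
    Matrix.cons_val_zero, Matrix.cons_val_succ, Fin.succ_zero_eq_one, Fin.succ_one_eq_two,
    Fin.isValue, Fin.reduceAdd, zero_mul, one_mul, neg_mul, zero_add, add_zero, sub_eq_add_neg,
    add_comm (goldenRatio' * ξ 0), add_comm (-(goldenRatio' * ξ 0))]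
  abel

theorem sum_icoVerts_dotProduct (ξ : Fin 3 → ℝ) : ∑ i, ∑ j, icoVerts i j * ξ j = 0 :=
  (sum_comp_icoVerts_dotProduct id ξ).trans (sum_eq_zero fun j _ ↦ by simp only [id]; ring)

theorem sum_icoVerts_dotProduct_sq (ξ : Fin 3 → ℝ) :
    ∑ i, (∑ j, icoVerts i j * ξ j) ^ 2 =
      4 * (1 + goldenRatio' ^ 2) * (ξ 0 ^ 2 + ξ 1 ^ 2 + ξ 2 ^ 2) := by
  rw [sum_comp_icoVerts_dotProduct (· ^ 2), Fin.sum_univ_three]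
  simp only [zero_add, Fin.reduceAdd]
  ring

theorem sum_icoVerts_dotProduct_pow_four (ξ : Fin 3 → ℝ) :
    ∑ i, (∑ j, icoVerts i j * ξ j) ^ 4 =
      12 * goldenRatio' ^ 2 * (ξ 0 ^ 2 + ξ 1 ^ 2 + ξ 2 ^ 2) ^ 2 := by
  have expansion : ∑ i, (∑ j, icoVerts i j * ξ j) ^ 4 =
      4 * (goldenRatio' ^ 4 + 1) * (ξ 0 ^ 4 + ξ 1 ^ 4 + ξ 2 ^ 4) +
        24 * goldenRatio' ^ 2 * (ξ 0 ^ 2 * ξ 1 ^ 2 + ξ 1 ^ 2 * ξ 2 ^ 2 + ξ 2 ^ 2 * ξ 0 ^ 2) := by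
    rw [sum_comp_icoVerts_dotProduct (· ^ 4), Fin.sum_univ_three]
    simp only [zero_add, Fin.reduceAdd]
    ring
  rw [expansion, goldenRatio'_pow_four_add_one]
  ring

/-- for the twelve vertices of a regular icosahedron centered at the
origin, `e₄(⟨v₁,ξ⟩, …, ⟨v₁₂,ξ⟩) = C (ξ₁² + ξ₂² + ξ₃²)²` for some nonzero constant `C`. -/
theorem esymm_four_icosahedron :
    ∃ C : ℝ, C ≠ 0 ∧ ∀ ξ : Fin 3 → ℝ,
      ∑ S ∈ (Finset.univ : Finset (Fin 12)).powersetCard 4,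
        ∏ i ∈ S, (∑ j, icoVerts i j * ξ j)
        = C * (ξ 0 ^ 2 + ξ 1 ^ 2 + ξ 2 ^ 2) ^ 2 := by
  refine ⟨7 * goldenRatio' ^ 2, by have := goldenRatio'_pos; positivity, fun ξ ↦ ?_⟩
  have newton := eight_mul_sum_powersetCard_four_prod_of_sum_eq_zero (sum_icoVerts_dotProduct ξ)
  rw [sum_icoVerts_dotProduct_sq, sum_icoVerts_dotProduct_pow_four] at newton
  linear_combination newton / 8 +
    2 * (ξ 0 ^ 2 + ξ 1 ^ 2 + ξ 2 ^ 2) ^ 2 * goldenRatio'_pow_four_add_one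
end
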